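/- arXiv:2205.03581 — 6 statements merged into one kernel-verified Lean document; each statement's English description precedes it below -/
import Mathlib

section
/- Let A be a complex unital Banach algebra and a ∈ A. Then a is ag-Drazin invertible if and only if a is acc-quasi-polar, i.e., there exists an idempotent q ∈ A such that aq = qa, q ∈ aA ∩ Aa, and a(1 − q) ∈ A^acc. -/
open Filter Topology

/-- An element of a complex Banach algebra is quasinilpotent if its spectrum is `{0}`. -/
def IsQuasinilpotent {A : Type*} [NormedRing A] [NormedAlgebra ℂ A] (b : A) : Prop :=
  spectrum ℂ b = {0}

/-- `a` is generalized Drazin invertible. -/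
def IsGDrazinInv {A : Type*} [NormedRing A] [NormedAlgebra ℂ A] (a : A) : Prop :=
  ∃ x : A, a * x = x * a ∧ x * a * x = x ∧ IsQuasinilpotent (a - a ^ 2 * x)

/-- `a ∈ A^acc`: `a - λ1` is generalized Drazin invertible for all nonzero `λ`. -/
def MemAcc {A : Type*} [NormedRing A] [NormedAlgebra ℂ A] (a : A) : Prop :=
  ∀ l : ℂ, l ≠ 0 → IsGDrazinInv (a - l • (1 : A))

/-- `x` is an ag-Drazin inverse of `a`. -/
def IsAgDrazinInverseOf {A : Type*} [NormedRing A] [NormedAlgebra ℂ A] (x a : A) : Prop :=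
  a * x = x * a ∧ x * a * x = x ∧ MemAcc (a - a ^ 2 * x)

/-- `a` is ag-Drazin invertible. -/
def IsAgDrazinInv {A : Type*} [NormedRing A] [NormedAlgebra ℂ A] (a : A) : Prop :=
  ∃ x : A, IsAgDrazinInverseOf x a

/-- The generalized Drazin spectrum. -/
def gDrazinSpectrum {A : Type*} [NormedRing A] [NormedAlgebra ℂ A] (a : A) : Set ℂ :=
  {l : ℂ | ¬ IsGDrazinInv (a - l • (1 : A))}

/-- The ag-Drazin spectrum. -/
def agDrazinSpectrum {A : Type*} [NormedRing A] [NormedAlgebra ℂ A] (a : A) : Set ℂ :=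
  {l : ℂ | ¬ IsAgDrazinInv (a - l • (1 : A))}

/-!
Commuting outer inverses `x` of `a` correspond to the idempotents `q ∈ aA ∩ Aa` commuting with `a`,
via `q = a * x`; conversely, if `q = a * u = v * a`, then `x = q * u = v * q`. The theorem follows
because `a - a ^ 2 * x = a * (1 - a * x)`, so this remainder depends on `x` only through `q`.
-/

section Semigroup

variable {S : Type*} [Semigroup S] {a x q u v : S}

lemma isIdempotentElem_mul_of_mul_mul_eq_right (hx : x * a * x = x) :
    IsIdempotentElem (a * x) := by
  rw [IsIdempotentElem, mul_assoc, ← mul_assoc x, hx]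

lemma mul_mul_eq_of_isIdempotentElem_of_eq_mul_right (hq : IsIdempotentElem q)
    (hcomm : Commute a q) (hu : q = a * u) : a * (q * u) = q := by
  rw [hcomm.left_comm, ← hu, hq.eq]

lemma mul_mul_eq_of_isIdempotentElem_of_eq_mul_left (hq : IsIdempotentElem q)
    (hcomm : Commute a q) (hv : q = v * a) : v * q * a = q := by
  rw [← hcomm.right_comm, ← hv, hq.eq]

theorem exists_commute_outer_inverse_mul_eq_iff :
    (∃ x, Commute a x ∧ x * a * x = x ∧ a * x = q) ↔
      IsIdempotentElem q ∧ Commute a q ∧ (∃ u, q = a * u) ∧ ∃ v, q = v * a := by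
  constructor
  · rintro ⟨x, hcomm, hx, rfl⟩
    exact ⟨isIdempotentElem_mul_of_mul_mul_eq_right hx, (Commute.refl a).mul_right hcomm,
      ⟨x, rfl⟩, ⟨x, hcomm.eq⟩⟩
  · rintro ⟨hq, hcomm, ⟨u, hu⟩, ⟨v, hv⟩⟩
    have hx_eq : q * u = v * q :=
      calc
        q * u = v * a * u := by rw [← hv]
        _ = v * q := by rw [mul_assoc, ← hu]
    have hleft : a * (q * u) = q := mul_mul_eq_of_isIdempotentElem_of_eq_mul_right hq hcomm hu
    have hright : q * u * a = q :=
      hx_eq ▸ mul_mul_eq_of_isIdempotentElem_of_eq_mul_left hq hcomm hv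
    have houter : q * u * a * (q * u) = q * u := by rw [hright, ← mul_assoc, hq.eq]
    exact ⟨q * u, hleft.trans hright.symm, houter, hleft⟩

end Semigroup

/-- The case `P = IsNilpotent` is the corresponding characterization of Drazin invertibility, and
`P = IsQuasinilpotent` that of generalized Drazin invertibility. -/
theorem agDrazin_iff_acc_quasi_polar_general {R : Type*} [Ring R] (P : R → Prop) (a : R) :
    (∃ x : R, a * x = x * a ∧ x * a * x = x ∧ P (a - a ^ 2 * x)) ↔
      ∃ q : R, q * q = q ∧ a * q = q * a ∧ (∃ u : R, q = a * u) ∧ (∃ v : R, q = v * a) ∧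
        P (a * (1 - q)) := by
  have remainder_eq (x : R) : a - a ^ 2 * x = a * (1 - a * x) := by noncomm_ring
  simp only [remainder_eq]
  constructor
  · rintro ⟨x, hcomm, hx, hP⟩
    obtain ⟨hq, hq_comm, hu, hv⟩ :=
      exists_commute_outer_inverse_mul_eq_iff.mp ⟨x, hcomm, hx, rfl⟩
    exact ⟨a * x, hq, hq_comm, hu, hv, hP⟩
  · rintro ⟨q, hq, hq_comm, hu, hv, hP⟩
    obtain ⟨x, hcomm, hx, rfl⟩ :=
      exists_commute_outer_inverse_mul_eq_iff.mpr ⟨hq, hq_comm, hu, hv⟩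
    exact ⟨x, hcomm, hx, hP⟩

/-- `a` is ag-Drazin invertible iff `a` is acc-quasi-polar. -/
theorem agDrazin_iff_acc_quasi_polar {A : Type*} [NormedRing A] [NormedAlgebra ℂ A]
    [CompleteSpace A] (a : A) :
    IsAgDrazinInv a ↔
      ∃ q : A, q * q = q ∧ a * q = q * a ∧ (∃ u : A, q = a * u) ∧ (∃ v : A, q = v * a) ∧
        MemAcc (a * (1 - q)) :=
  agDrazin_iff_acc_quasi_polar_general MemAcc a
end

section
/- Let A be a complex unital Banach algebra and a ∈ A. Then a is ag-Drazin invertible if and only if there exists an idempotent p ∈ A such that ap = pa, a + p is generalized Drazin invertible, and ap ∈ A^acc. -/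
open Filter Topology

/-!
Let `p` be an idempotent. Elements commuting with `p` are block diagonal for the decomposition
`1 = p + (1 - p)`, so spectra, and with them every notion of Drazin inverse, can be treated block
by block. The only analytic input is that generalized Drazin inverses of `a` commute with the
commutant of `a`, hence respect the blocks; this follows from Gelfand's formula, as `rⁿ c yⁿ → 0`
for `r` quasinilpotent.

If `x` is an ag-Drazin inverse of `a` and `p = 1 - a x`, then `a + p` has the blocks `a p + 1`,
which is generalized Drazin invertible because `a p ∈ A^acc`, and `a`, which is invertible there
with inverse `x`. Conversely `a` has the blocks `a p ∈ A^acc`, with ag-Drazin inverse `0`, and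
`a + p`, with any generalized Drazin inverse of `a + p` as ag-Drazin inverse.
-/

section Ring

variable {R : Type*} [Ring R] {p u v u' v' : R}

/-- The element whose block for the idempotent `p` is that of `u` and whose block for the
complementary idempotent `1 - p` is that of `v`. It is meant for `u` and `v` commuting with `p`,
where it is the block diagonal element of the Peirce decomposition. -/
def peirceDiag (p u v : R) : R :=
  p * u + (1 - p) * v

theorem peirceDiag_self (p u : R) : peirceDiag p u u = u := by
  unfold peirceDiag
  noncomm_ring

theorem peirceDiag_sub_peirceDiag (p u v u' v' : R) :
    peirceDiag p u v - peirceDiag p u' v' = peirceDiag p (u - u') (v - v') := by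
  unfold peirceDiag
  noncomm_ring

theorem mul_peirceDiag (hp : IsIdempotentElem p) : p * peirceDiag p u v = p * u := by
  rw [peirceDiag, mul_add, ← mul_assoc, ← mul_assoc, hp.eq, hp.mul_one_sub_self, zero_mul, add_zero]

theorem one_sub_mul_peirceDiag (hp : IsIdempotentElem p) :
    (1 - p) * peirceDiag p u v = (1 - p) * v := by
  rw [peirceDiag, mul_add, ← mul_assoc, ← mul_assoc, hp.one_sub.eq, hp.one_sub_mul_self, zero_mul,
    zero_add]

theorem peirceDiag_mul_peirceDiag (hp : IsIdempotentElem p) (hu : Commute p u) (hv : Commute p v) :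
    peirceDiag p u v * peirceDiag p u' v' = peirceDiag p (u * u') (v * v') := by
  have hv_compl : Commute (1 - p) v := (Commute.one_left v).sub_left hv
  calc peirceDiag p u v * peirceDiag p u' v'
      = u * (p * peirceDiag p u' v') + v * ((1 - p) * peirceDiag p u' v') := by
        rw [peirceDiag, hu.eq, hv_compl.eq, add_mul, mul_assoc, mul_assoc]
    _ = u * p * u' + v * (1 - p) * v' := by
        rw [mul_peirceDiag hp, one_sub_mul_peirceDiag hp, mul_assoc, mul_assoc]
    _ = peirceDiag p (u * u') (v * v') := by
        rw [← hu.eq, ← hv_compl.eq, mul_assoc, mul_assoc, peirceDiag]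

theorem peirceDiag_eq_of_mul_eq {w : R} (hu : p * u = p * w) (hv : (1 - p) * v = (1 - p) * w) :
    peirceDiag p u v = w := by
  rw [peirceDiag, hu, hv, ← peirceDiag, peirceDiag_self]

theorem commute_peirceDiag (hu : Commute p u) (hv : Commute p v) : Commute p (peirceDiag p u v) :=
  ((Commute.refl p).mul_right hu).add_right
    (((Commute.one_right p).sub_right (Commute.refl p)).mul_right hv)

theorem peirceDiag_mul_add (hp : IsIdempotentElem p) (hu : Commute p u) :
    peirceDiag p (u * p) (u + p) = u := by
  apply peirceDiag_eq_of_mul_eq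
  · rw [← hu.eq, ← mul_assoc, hp.eq]
  · rw [mul_add, hp.one_sub_mul_self, add_zero]

theorem peirceDiag_mul_add_one (hp : IsIdempotentElem p) (hu : Commute p u) :
    peirceDiag p (u * p + 1) (peirceDiag p 1 u) = u + p := by
  apply peirceDiag_eq_of_mul_eq
  · rw [mul_add, mul_add, ← hu.eq, ← mul_assoc, hp.eq, mul_one]
  · rw [one_sub_mul_peirceDiag hp, mul_add, hp.one_sub_mul_self, add_zero]

theorem isUnit_peirceDiag (hp : IsIdempotentElem p) (hu : Commute p u) (hv : Commute p v)
    (hu_unit : IsUnit u) (hv_unit : IsUnit v) : IsUnit (peirceDiag p u v) := by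
  obtain ⟨u, rfl⟩ := hu_unit
  obtain ⟨v, rfl⟩ := hv_unit
  refine ⟨⟨peirceDiag p u v, peirceDiag p ↑u⁻¹ ↑v⁻¹, ?_, ?_⟩, rfl⟩
  · rw [peirceDiag_mul_peirceDiag hp hu hv, u.mul_inv, v.mul_inv, peirceDiag_self]
  · rw [peirceDiag_mul_peirceDiag hp hu.units_inv_right hv.units_inv_right, u.inv_mul, v.inv_mul,
      peirceDiag_self]

theorem spectrum_peirceDiag_subset {𝕜 : Type*} [CommRing 𝕜] [Algebra 𝕜 R] (hp : IsIdempotentElem p)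
    (hu : Commute p u) (hv : Commute p v) :
    spectrum 𝕜 (peirceDiag p u v) ⊆ spectrum 𝕜 u ∪ spectrum 𝕜 v := by
  intro l hl
  by_contra hl_union
  obtain ⟨hlu, hlv⟩ := not_or.mp hl_union
  have hpl : Commute p (algebraMap 𝕜 R l) := Algebra.commute_algebraMap_right l p
  have h_unit := isUnit_peirceDiag hp (hpl.sub_right hu) (hpl.sub_right hv)
    (spectrum.notMem_iff.mp hlu) (spectrum.notMem_iff.mp hlv)
  rw [← peirceDiag_sub_peirceDiag, peirceDiag_self] at h_unit
  exact spectrum.notMem_iff.mpr h_unit hl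

theorem commute_of_one_sub_mul_mul_eq_zero {e c : R} (hl : (1 - e) * c * e = 0)
    (hr : e * c * (1 - e) = 0) : Commute e c := by
  have hce : c * e = e * c * e := by simpa only [sub_mul, one_mul, sub_eq_zero] using hl
  have hec : e * c = e * c * e := by simpa only [mul_sub, mul_one, sub_eq_zero] using hr
  exact hec.trans hce.symm

theorem mul_one_sub_mul_eq_sub_sq_mul (a x : R) : a * (1 - a * x) = a - a ^ 2 * x := by
  noncomm_ring

end Ring

/-- `x` is a commuting outer inverse of `a` whose remainder `a - a² x` satisfies `P`. Taking `P` to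
be `IsQuasinilpotent` or `MemAcc` gives the generalized Drazin inverses and the ag-Drazin inverses,
so that both are handled at once. -/
structure IsDrazinInverseModulo {R : Type*} [Ring R] (P : R → Prop) (x a : R) : Prop where
  commute : Commute a x
  outer : x * a * x = x
  remainder : P (a - a ^ 2 * x)

namespace IsDrazinInverseModulo

variable {R : Type*} [Ring R] {P Q : R → Prop} {a x p u v y z : R}

theorem mono (hPQ : ∀ b, P b → Q b) (h : IsDrazinInverseModulo P x a) :
    IsDrazinInverseModulo Q x a :=
  ⟨h.commute, h.outer, hPQ _ h.remainder⟩

theorem zero_left (ha : P a) : IsDrazinInverseModulo P 0 a where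
  commute := Commute.zero_right a
  outer := mul_zero _
  remainder := by rwa [mul_zero, sub_zero]

theorem units_inv (h0 : P 0) (u : Rˣ) : IsDrazinInverseModulo P (↑u⁻¹ : R) u where
  commute := (Commute.refl (u : R)).units_inv_right
  outer := by rw [u.inv_mul, one_mul]
  remainder := by rwa [pow_two, mul_assoc, u.mul_inv, mul_one, sub_self]

theorem isIdempotentElem_mul (h : IsDrazinInverseModulo P x a) : IsIdempotentElem (a * x) := by
  rw [IsIdempotentElem, mul_assoc, ← mul_assoc x a x, h.outer]

theorem commute_one_sub_mul (h : IsDrazinInverseModulo P x a) : Commute (1 - a * x) a :=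
  (Commute.one_left a).sub_left ((Commute.refl a).mul_left h.commute.symm)

theorem commute_of_commute_mul {c : R} (h : IsDrazinInverseModulo P x a) (hac : Commute a c)
    (haxc : Commute (a * x) c) : Commute x c := by
  have hxax : x * (a * x) = x := by rw [← mul_assoc, h.outer]
  calc x * c = x * (a * x) * c := by rw [hxax]
    _ = x * (a * c) * x := by rw [hac.eq, mul_assoc, haxc.eq]; noncomm_ring
    _ = a * x * c * x := by rw [h.commute.eq]; noncomm_ring
    _ = c * (x * a * x) := by rw [haxc.eq, h.commute.eq, mul_assoc]
    _ = c * x := by rw [h.outer]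

theorem pow_succ_mul_pow_succ (h : IsDrazinInverseModulo P x a) (n : ℕ) :
    a ^ (n + 1) * x ^ (n + 1) = a * x := by
  rw [← h.commute.mul_pow, h.isIdempotentElem_mul.pow_succ_eq]

theorem remainder_pow_succ (h : IsDrazinInverseModulo P x a) (n : ℕ) :
    (a - a ^ 2 * x) ^ (n + 1) = a ^ (n + 1) * (1 - a * x) := by
  rw [← mul_one_sub_mul_eq_sub_sq_mul, h.commute_one_sub_mul.symm.mul_pow,
    h.isIdempotentElem_mul.one_sub.pow_succ_eq]

theorem remainder_pow_succ_mul_mul_pow_succ {c : R} (h : IsDrazinInverseModulo P x a)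
    (hac : Commute a c) (n : ℕ) :
    (a - a ^ 2 * x) ^ (n + 1) * c * x ^ (n + 1) = (1 - a * x) * c * (a * x) := by
  calc (a - a ^ 2 * x) ^ (n + 1) * c * x ^ (n + 1)
      = (1 - a * x) * (a ^ (n + 1) * c) * x ^ (n + 1) := by
        rw [h.remainder_pow_succ, ← (h.commute_one_sub_mul.pow_right (n + 1)).eq,
          mul_assoc (1 - a * x)]
    _ = (1 - a * x) * c * (a ^ (n + 1) * x ^ (n + 1)) := by
        rw [(hac.pow_left (n + 1)).eq]
        simp only [mul_assoc]
    _ = (1 - a * x) * c * (a * x) := by rw [h.pow_succ_mul_pow_succ]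

theorem pow_succ_mul_mul_remainder_pow_succ {c : R} (h : IsDrazinInverseModulo P x a)
    (hac : Commute a c) (n : ℕ) :
    x ^ (n + 1) * c * (a - a ^ 2 * x) ^ (n + 1) = a * x * c * (1 - a * x) := by
  calc x ^ (n + 1) * c * (a - a ^ 2 * x) ^ (n + 1)
      = x ^ (n + 1) * (c * a ^ (n + 1)) * (1 - a * x) := by
        rw [h.remainder_pow_succ]
        simp only [mul_assoc]
    _ = a ^ (n + 1) * x ^ (n + 1) * c * (1 - a * x) := by
        rw [← (hac.pow_left (n + 1)).eq, ← mul_assoc, (h.commute.pow_pow (n + 1) (n + 1)).eq]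
    _ = a * x * c * (1 - a * x) := by rw [h.pow_succ_mul_pow_succ]

theorem isUnit_peirceDiag_one (h : IsDrazinInverseModulo P x a) :
    IsUnit (peirceDiag (1 - a * x) 1 a) := by
  have hp : IsIdempotentElem (1 - a * x) := h.isIdempotentElem_mul.one_sub
  have hpx : Commute (1 - a * x) x :=
    (Commute.one_left x).sub_left (h.commute.mul_left (Commute.refl x))
  have h_one : peirceDiag (1 - a * x) 1 (a * x) = 1 := by
    rw [peirceDiag, sub_sub_cancel, h.isIdempotentElem_mul.eq, mul_one, sub_add_cancel]
  refine ⟨⟨peirceDiag (1 - a * x) 1 a, peirceDiag (1 - a * x) 1 x, ?_, ?_⟩, rfl⟩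
  · rw [peirceDiag_mul_peirceDiag hp (Commute.one_right _) h.commute_one_sub_mul, mul_one, h_one]
  · rw [peirceDiag_mul_peirceDiag hp (Commute.one_right _) hpx, mul_one, ← h.commute.eq, h_one]

protected theorem peirceDiag
    (hP : ∀ {b c : R}, Commute p b → Commute p c → P b → P c → P (peirceDiag p b c))
    (hp : IsIdempotentElem p) (hpu : Commute p u) (hpv : Commute p v) (hpy : Commute p y)
    (hpz : Commute p z) (hy : IsDrazinInverseModulo P y u) (hz : IsDrazinInverseModulo P z v) :
    IsDrazinInverseModulo P (peirceDiag p y z) (peirceDiag p u v) where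
  commute := by
    rw [Commute, SemiconjBy, peirceDiag_mul_peirceDiag hp hpu hpv,
      peirceDiag_mul_peirceDiag hp hpy hpz, hy.commute.eq, hz.commute.eq]
  outer := by
    rw [peirceDiag_mul_peirceDiag hp hpy hpz,
      peirceDiag_mul_peirceDiag hp (hpy.mul_right hpu) (hpz.mul_right hpv), hy.outer, hz.outer]
  remainder := by
    have h_commute {b w : R} (hb : Commute p b) (hw : Commute p w) : Commute p (b - b ^ 2 * w) :=
      hb.sub_right ((hb.pow_right 2).mul_right hw)
    rw [pow_two, peirceDiag_mul_peirceDiag hp hpu hpv,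
      peirceDiag_mul_peirceDiag hp (hpu.mul_right hpu) (hpv.mul_right hpv),
      peirceDiag_sub_peirceDiag, ← pow_two, ← pow_two]
    exact hP (h_commute hpu hpy) (h_commute hpv hpz) hy.remainder hz.remainder

end IsDrazinInverseModulo

section Spectrum

variable {A : Type*} [NormedRing A] [NormedAlgebra ℂ A] [CompleteSpace A]

theorem eventually_enorm_pow_le_of_spectralRadius_lt {a : A} {s : ENNReal}
    (hs : spectralRadius ℂ a < s) : ∀ᶠ n : ℕ in atTop, ‖a ^ n‖ₑ ≤ s ^ n := by
  have gelfand := spectrum.pow_nnnorm_pow_one_div_tendsto_nhds_spectralRadius a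
  filter_upwards [gelfand.eventually_lt_const hs, eventually_gt_atTop 0] with n hn hn_pos
  have hn_pos' : (0 : ℝ) < n := Nat.cast_pos.mpr hn_pos
  rw [one_div, ENNReal.rpow_inv_lt_iff hn_pos', ENNReal.rpow_natCast] at hn
  exact hn.le

theorem tendsto_pow_zero_of_spectralRadius_lt_one {a : A} (ha : spectralRadius ℂ a < 1) :
    Tendsto (fun n : ℕ => a ^ n) atTop (𝓝 0) := by
  obtain ⟨s, has, hs⟩ := exists_between ha
  rw [tendsto_zero_iff_enorm_tendsto_zero]
  exact tendsto_of_tendsto_of_tendsto_of_le_of_le' tendsto_const_nhds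
    (ENNReal.tendsto_pow_atTop_nhds_zero_of_lt_one hs) (Eventually.of_forall fun _ => bot_le)
    (eventually_enorm_pow_le_of_spectralRadius_lt has)

end Spectrum

namespace IsQuasinilpotent

variable {A : Type*} [NormedRing A] [NormedAlgebra ℂ A] {b r p u v : A}

protected theorem nontrivial (h : IsQuasinilpotent b) : Nontrivial A := by
  by_contra h_trivial
  have : Subsingleton A := not_nontrivial_iff_subsingleton.mp h_trivial
  exact Set.singleton_ne_empty (0 : ℂ) (h.symm.trans (spectrum.of_subsingleton b))

protected theorem zero [Nontrivial A] : IsQuasinilpotent (0 : A) :=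
  spectrum.zero_eq

theorem spectralRadius_eq_zero (h : IsQuasinilpotent b) : spectralRadius ℂ b = 0 := by
  rw [spectralRadius, show spectrum ℂ b = {0} from h]
  simp

theorem isUnit_sub_smul_one (h : IsQuasinilpotent b) {l : ℂ} (hl : l ≠ 0) :
    IsUnit (b - l • (1 : A)) := by
  have hl_spectrum : l ∉ spectrum ℂ b := by rwa [show spectrum ℂ b = {0} from h]
  have h_unit := (spectrum.notMem_iff.mp hl_spectrum).neg
  rwa [neg_sub, Algebra.algebraMap_eq_smul_one] at h_unit

theorem const_smul (h : IsQuasinilpotent b) (k : ℂ) : IsQuasinilpotent (k • b) := by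
  have := h.nontrivial
  have hb : spectrum ℂ b = {0} := h
  rw [IsQuasinilpotent, spectrum.smul_eq_smul k b (hb ▸ Set.singleton_nonempty 0), hb,
    Set.smul_set_singleton, smul_zero]

variable [CompleteSpace A]

theorem tendsto_norm_pow_mul_norm_pow (h : IsQuasinilpotent r) (y : A) :
    Tendsto (fun n : ℕ => ‖r ^ n‖ * ‖y ^ n‖) atTop (𝓝 0) := by
  have h_radius : spectralRadius ℂ ((‖y‖ : ℂ) • r) < 1 := by
    rw [(h.const_smul _).spectralRadius_eq_zero]
    exact one_pos
  have h_pow := tendsto_zero_iff_norm_tendsto_zero.mp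
    (tendsto_pow_zero_of_spectralRadius_lt_one h_radius)
  refine squeeze_zero' (Eventually.of_forall fun n => by positivity) ?_ h_pow
  filter_upwards [eventually_gt_atTop 0] with n hn
  calc ‖r ^ n‖ * ‖y ^ n‖ ≤ ‖r ^ n‖ * ‖y‖ ^ n := by gcongr; exact norm_pow_le' y hn
    _ = ‖((‖y‖ : ℂ) • r) ^ n‖ := by
        rw [smul_pow, norm_smul, norm_pow (‖y‖ : ℂ), Complex.norm_real, norm_norm, mul_comm]

theorem tendsto_pow_mul_mul_pow (h : IsQuasinilpotent r) (c y : A) :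
    Tendsto (fun n : ℕ => r ^ n * c * y ^ n) atTop (𝓝 0) := by
  refine squeeze_zero_norm (fun n => ?_)
    (by simpa only [mul_zero] using (h.tendsto_norm_pow_mul_norm_pow y).const_mul ‖c‖)
  calc ‖r ^ n * c * y ^ n‖ ≤ ‖r ^ n‖ * ‖c‖ * ‖y ^ n‖ := norm_mul₃_le
    _ = ‖c‖ * (‖r ^ n‖ * ‖y ^ n‖) := by ring

theorem tendsto_pow_mul_mul_pow' (h : IsQuasinilpotent r) (c y : A) :
    Tendsto (fun n : ℕ => y ^ n * c * r ^ n) atTop (𝓝 0) := by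
  refine squeeze_zero_norm (fun n => ?_)
    (by simpa only [mul_zero] using (h.tendsto_norm_pow_mul_norm_pow y).const_mul ‖c‖)
  calc ‖y ^ n * c * r ^ n‖ ≤ ‖y ^ n‖ * ‖c‖ * ‖r ^ n‖ := norm_mul₃_le
    _ = ‖c‖ * (‖r ^ n‖ * ‖y ^ n‖) := by ring

protected theorem peirceDiag (hp : IsIdempotentElem p) (hpu : Commute p u) (hpv : Commute p v)
    (hu : IsQuasinilpotent u) (hv : IsQuasinilpotent v) : IsQuasinilpotent (peirceDiag p u v) := by
  have := hu.nontrivial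
  refine (spectrum.nonempty _).subset_singleton_iff.mp ?_
  calc spectrum ℂ (peirceDiag p u v) ⊆ spectrum ℂ u ∪ spectrum ℂ v :=
        spectrum_peirceDiag_subset hp hpu hpv
    _ = {0} := by
        rw [show spectrum ℂ u = {0} from hu, show spectrum ℂ v = {0} from hv, Set.union_self]

end IsQuasinilpotent

section BanachAlgebra

variable {A : Type*} [NormedRing A] [NormedAlgebra ℂ A]

theorem isGDrazinInv_iff {a : A} :
    IsGDrazinInv a ↔ ∃ x, IsDrazinInverseModulo IsQuasinilpotent x a :=
  exists_congr fun _ => ⟨fun ⟨hc, ho, hr⟩ => ⟨hc, ho, hr⟩, fun ⟨hc, ho, hr⟩ => ⟨hc, ho, hr⟩⟩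

theorem isAgDrazinInv_iff {a : A} :
    IsAgDrazinInv a ↔ ∃ x, IsDrazinInverseModulo MemAcc x a :=
  exists_congr fun _ => ⟨fun ⟨hc, ho, hr⟩ => ⟨hc, ho, hr⟩, fun ⟨hc, ho, hr⟩ => ⟨hc, ho, hr⟩⟩

theorem IsDrazinInverseModulo.commute_of_commute [CompleteSpace A] {a x c : A}
    (h : IsDrazinInverseModulo IsQuasinilpotent x a) (hac : Commute a c) : Commute x c := by
  have h_left : (1 - a * x) * c * (a * x) = 0 := by
    have h_lim := (h.remainder.tendsto_pow_mul_mul_pow c x).comp (tendsto_add_atTop_nat 1)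
    exact tendsto_nhds_unique
      (tendsto_const_nhds.congr fun n => (h.remainder_pow_succ_mul_mul_pow_succ hac n).symm) h_lim
  have h_right : a * x * c * (1 - a * x) = 0 := by
    have h_lim := (h.remainder.tendsto_pow_mul_mul_pow' c x).comp (tendsto_add_atTop_nat 1)
    exact tendsto_nhds_unique
      (tendsto_const_nhds.congr fun n => (h.pow_succ_mul_mul_remainder_pow_succ hac n).symm) h_lim
  exact h.commute_of_commute_mul hac (commute_of_one_sub_mul_mul_eq_zero h_left h_right)

namespace IsGDrazinInv

variable {a p u v : A}

protected theorem nontrivial (h : IsGDrazinInv a) : Nontrivial A :=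
  let ⟨_, hx⟩ := isGDrazinInv_iff.mp h
  hx.remainder.nontrivial

theorem of_isUnit [Nontrivial A] (h : IsUnit a) : IsGDrazinInv a := by
  obtain ⟨u, rfl⟩ := h
  exact isGDrazinInv_iff.mpr ⟨_, .units_inv IsQuasinilpotent.zero u⟩

protected theorem peirceDiag [CompleteSpace A] (hp : IsIdempotentElem p) (hpu : Commute p u)
    (hpv : Commute p v) (hu : IsGDrazinInv u) (hv : IsGDrazinInv v) :
    IsGDrazinInv (peirceDiag p u v) := by
  obtain ⟨y, hy⟩ := isGDrazinInv_iff.mp hu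
  obtain ⟨z, hz⟩ := isGDrazinInv_iff.mp hv
  exact isGDrazinInv_iff.mpr ⟨_, .peirceDiag (IsQuasinilpotent.peirceDiag hp) hp hpu hpv
    (hy.commute_of_commute hpu.symm).symm (hz.commute_of_commute hpv.symm).symm hy hz⟩

end IsGDrazinInv

theorem IsQuasinilpotent.memAcc {b : A} (h : IsQuasinilpotent b) : MemAcc b := fun _ hl =>
  have := h.nontrivial
  .of_isUnit (h.isUnit_sub_smul_one hl)

namespace MemAcc

variable {b p u v : A}

theorem isGDrazinInv_add_one (h : MemAcc b) : IsGDrazinInv (b + 1) := by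
  simpa only [neg_smul, one_smul, sub_neg_eq_add] using h (-1) (neg_ne_zero.mpr one_ne_zero)

protected theorem peirceDiag [CompleteSpace A] (hp : IsIdempotentElem p) (hpu : Commute p u)
    (hpv : Commute p v) (hu : MemAcc u) (hv : MemAcc v) : MemAcc (peirceDiag p u v) := by
  intro l hl
  have hpl : Commute p (l • (1 : A)) := (Commute.one_right p).smul_right l
  rw [← peirceDiag_self p (l • (1 : A)), peirceDiag_sub_peirceDiag]
  exact .peirceDiag hp (hpu.sub_right hpl) (hpv.sub_right hpl) (hu l hl) (hv l hl)

end MemAcc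

theorem IsDrazinInverseModulo.isGDrazinInv_add_one_sub_mul [CompleteSpace A] {a x : A}
    (h : IsDrazinInverseModulo MemAcc x a) : IsGDrazinInv (a + (1 - a * x)) := by
  have hp : IsIdempotentElem (1 - a * x) := h.isIdempotentElem_mul.one_sub
  have hpa : Commute (1 - a * x) a := h.commute_one_sub_mul
  have h_acc : IsGDrazinInv (a * (1 - a * x) + 1) := by
    rw [mul_one_sub_mul_eq_sub_sq_mul]
    exact h.remainder.isGDrazinInv_add_one
  have := h_acc.nontrivial
  rw [← peirceDiag_mul_add_one hp hpa]
  exact .peirceDiag hp ((hpa.mul_right (.refl _)).add_right (.one_right _))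
    (commute_peirceDiag (.one_right _) hpa) h_acc (.of_isUnit h.isUnit_peirceDiag_one)

theorem isAgDrazinInv_of_isGDrazinInv_add [CompleteSpace A] {a p : A} (hp : IsIdempotentElem p)
    (hpa : Commute p a) (h_add : IsGDrazinInv (a + p)) (h_mul : MemAcc (a * p)) :
    IsAgDrazinInv a := by
  obtain ⟨b, hb⟩ := isGDrazinInv_iff.mp h_add
  have hp_add : Commute p (a + p) := hpa.add_right (.refl p)
  rw [← peirceDiag_mul_add hp hpa]
  exact isAgDrazinInv_iff.mpr ⟨_, .peirceDiag (MemAcc.peirceDiag hp) hp (hpa.mul_right (.refl p))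
    hp_add (.zero_right p) (hb.commute_of_commute hp_add.symm).symm (.zero_left h_mul)
    (hb.mono fun _ => IsQuasinilpotent.memAcc)⟩

end BanachAlgebra

theorem agDrazin_iff_exists_idem_gDrazin {A : Type*} [NormedRing A] [NormedAlgebra ℂ A]
    [CompleteSpace A] (a : A) :
    IsAgDrazinInv a ↔
      ∃ p : A, p * p = p ∧ a * p = p * a ∧ IsGDrazinInv (a + p) ∧ MemAcc (a * p) := by
  constructor
  · intro ha
    obtain ⟨x, hx⟩ := isAgDrazinInv_iff.mp ha
    refine ⟨1 - a * x, hx.isIdempotentElem_mul.one_sub, hx.commute_one_sub_mul.symm,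
      hx.isGDrazinInv_add_one_sub_mul, ?_⟩
    rw [mul_one_sub_mul_eq_sub_sq_mul]
    exact hx.remainder
  · rintro ⟨p, hp, hap, h_add, h_mul⟩
    exact isAgDrazinInv_of_isGDrazinInv_add hp hap.symm h_add h_mul
end

section
/- Let A be a complex unital Banach algebra and a ∈ A. Then a is ag-Drazin invertible if and only if there exists an idempotent f ∈ A such that af = fa, a(1 − f) ∈ A^acc, and af + 1 − f is invertible in A. -/
open Filter Topology

/-!
An outer inverse `x` of `a` commuting with `a` is the same thing as an inverse of `a f` in the
corner ring `f A f`, where `f = a x`. Invertibility of `a f` in the corner amounts to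
invertibility of `a f + (1 - f)` in `A`, and the remainder `a - a² x` is `a (1 - f)`.
-/

section CornerInverse

variable {R : Type*} [Ring R] {a f p q x : R}

theorem add_one_sub_mul_add_one_sub (hf : IsIdempotentElem f) (hp : p * f = p) (hq : f * q = q) :
    (p + 1 - f) * (q + 1 - f) = p * q + 1 - f := by
  simp only [add_mul, sub_mul, mul_add, mul_sub, mul_one, one_mul, hp, hq, hf.eq]
  abel

theorem isUnit_mul_add_one_sub_of_mul_eq (hax : a * x = f) (hxa : x * a = f) (hxf : x * f = x) :
    IsUnit (a * f + 1 - f) := by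
  have hf : IsIdempotentElem f := by
    calc f * f = a * (x * f) := by rw [← mul_assoc, hax]
      _ = f := by rw [hxf, hax]
  have hfx : f * x = x := by rw [← hxa, mul_assoc, hax, hxf]
  have hfa : f * a = a * f := by rw [← hax, mul_assoc, hxa, hax]
  have right_inv : (a * f + 1 - f) * (x + 1 - f) = 1 := by
    rw [add_one_sub_mul_add_one_sub hf (by rw [mul_assoc, hf.eq]) hfx, mul_assoc, hfx, hax,
      add_sub_cancel_left]
  have left_inv : (x + 1 - f) * (a * f + 1 - f) = 1 := by
    rw [add_one_sub_mul_add_one_sub hf hxf (by rw [← mul_assoc, hfa, mul_assoc, hf.eq]),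
      ← mul_assoc, hxa, hf.eq, add_sub_cancel_left]
  exact ⟨⟨_, _, right_inv, left_inv⟩, rfl⟩

theorem exists_mul_eq_of_isUnit_mul_add_one_sub (hf : IsIdempotentElem f) (haf : Commute a f)
    (hunit : IsUnit (a * f + 1 - f)) : ∃ x, a * x = f ∧ x * a = f ∧ x * f = x := by
  obtain ⟨u, hu⟩ := hunit
  have huf : u * f = a * f := by
    rw [hu, sub_mul, add_mul, mul_assoc, hf.eq, one_mul, add_sub_cancel_right]
  have hfu : f * u = a * f := by
    rw [hu, mul_sub, mul_add, ← mul_assoc, ← haf.eq, mul_assoc, hf.eq, mul_one,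
      add_sub_cancel_right]
  have hcomm : Commute f (u⁻¹ : Rˣ) := Commute.units_inv_right (hfu.trans huf.symm)
  refine ⟨(u⁻¹ : Rˣ) * f, ?_, ?_, ?_⟩
  · rw [← hcomm.eq, ← mul_assoc, ← hfu, Units.mul_inv_cancel_right]
  · rw [mul_assoc, ← haf.eq, ← huf, Units.inv_mul_cancel_left]
  · rw [mul_assoc, hf.eq]

theorem sub_sq_mul_eq_mul_one_sub (a x : R) : a - a ^ 2 * x = a * (1 - a * x) := by
  noncomm_ring

theorem agDrazin_iff_exists_idem_unit_general (P : R → Prop) (a : R) :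
    (∃ x, Commute a x ∧ x * a * x = x ∧ P (a - a ^ 2 * x)) ↔
      ∃ f, IsIdempotentElem f ∧ Commute a f ∧ P (a * (1 - f)) ∧ IsUnit (a * f + 1 - f) := by
  constructor
  · rintro ⟨x, hcomm, houter, hP⟩
    have hxax : x * (a * x) = x := by rw [← mul_assoc, houter]
    have hidem : IsIdempotentElem (a * x) := by rw [IsIdempotentElem, mul_assoc, hxax]
    have haax : Commute a (a * x) := (Commute.refl a).mul_right hcomm
    exact ⟨a * x, hidem, haax, sub_sq_mul_eq_mul_one_sub a x ▸ hP,
      isUnit_mul_add_one_sub_of_mul_eq rfl hcomm.eq.symm hxax⟩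
  · rintro ⟨f, hidem, haf, hP, hunit⟩
    obtain ⟨x, rfl, hxa, hxax⟩ := exists_mul_eq_of_isUnit_mul_add_one_sub hidem haf hunit
    exact ⟨x, hxa.symm, by rw [mul_assoc, hxax], (sub_sq_mul_eq_mul_one_sub a x).symm ▸ hP⟩

end CornerInverse

theorem agDrazin_iff_exists_idem_unit {A : Type*} [NormedRing A] [NormedAlgebra ℂ A]
    [CompleteSpace A] (a : A) :
    IsAgDrazinInv a ↔
      ∃ f : A, f * f = f ∧ a * f = f * a ∧ MemAcc (a * (1 - f)) ∧
        IsUnit (a * f + 1 - f) :=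
  agDrazin_iff_exists_idem_unit_general MemAcc a
end

section
/- Let A be a complex unital Banach algebra and a ∈ A. Then a has an ag-Drazin inverse x such that the spectrum σ(a − a²x) is a finite set if and only if a is generalized Drazin invertible. -/
open Filter Topology

/-!
An element `b` with finite spectrum is generalized Drazin invertible, so the condition defining
`A^acc` comes for free. The closed subalgebra generated by `b` is commutative and, the complement of
a finite set being connected, does not enlarge the spectrum of `b`; there, spectra are computed by
characters. Let `p` be a polynomial with `p 0 = 1` that vanishes on `σ(b) \ {0}`. Then
`g = p(b) - p(b)²` is quasinilpotent, so the generating series `C` of the Catalan numbers converges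
at `g`, and `w = g C(g)` is a quasinilpotent solution of `w - w² = p(b) - p(b)²`. It corrects `p(b)`
to an idempotent `f = (p(b) - w) / (1 - 2w)` with the same values at all characters, and then `b f`
is quasinilpotent and `b + f` is invertible. Finally, if `x` is an outer inverse of `a` commuting
with `a`, and `y` is a generalized Drazin inverse of `a - a² x`, then `x + y` is one of `a`.
-/

section CatalanSeries

variable {A : Type*} [NormedRing A]

/-- The generating series `∑ Cₙ gⁿ` of the Catalan numbers at `g`, with junk value `0` where it does
not converge. It provides the power series solution of `C = 1 + g C²`. -/
noncomputable def catalanSeries (g : A) : A :=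
  ∑' n, catalan n • g ^ n

lemma catalan_le_four_pow (n : ℕ) : catalan n ≤ 4 ^ n := by
  rw [catalan_eq_centralBinom_div]
  exact (Nat.div_le_self _ _).trans n.centralBinom_le_four_pow

lemma summable_norm_catalan_nsmul_pow {g : A} (hg : Summable fun n ↦ ‖g ^ n‖ * 4 ^ n) :
    Summable fun n ↦ ‖catalan n • g ^ n‖ := by
  refine hg.of_nonneg_of_le (fun n ↦ norm_nonneg _) fun n ↦ ?_
  calc ‖catalan n • g ^ n‖ ≤ catalan n * ‖g ^ n‖ := norm_nsmul_le
    _ ≤ 4 ^ n * ‖g ^ n‖ := by gcongr; exact_mod_cast catalan_le_four_pow n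
    _ = ‖g ^ n‖ * 4 ^ n := mul_comm _ _

open Finset.HasAntidiagonal in
lemma catalanSeries_eq_one_add_mul_sq [CompleteSpace A] {g : A}
    (hg : Summable fun n ↦ ‖g ^ n‖ * 4 ^ n) :
    catalanSeries g = 1 + g * catalanSeries g ^ 2 := by
  have hnorm := summable_norm_catalan_nsmul_pow hg
  have hcauchy (n : ℕ) :
      ∑ ij ∈ antidiagonal n, catalan ij.1 • g ^ ij.1 * catalan ij.2 • g ^ ij.2 =
        catalan (n + 1) • g ^ n := by
    rw [catalan_succ', Finset.sum_smul]
    refine Finset.sum_congr rfl fun ij hij ↦ ?_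
    rw [smul_mul_smul_comm, ← pow_add, mem_antidiagonal.mp hij]
  have hsq : catalanSeries g ^ 2 = ∑' n, catalan (n + 1) • g ^ n := by
    rw [sq, catalanSeries, tsum_mul_tsum_eq_tsum_sum_antidiagonal_of_summable_norm hnorm hnorm]
    exact tsum_congr hcauchy
  have hsummable : Summable fun n ↦ catalan (n + 1) • g ^ n :=
    (summable_norm_sum_mul_antidiagonal_of_summable_norm hnorm hnorm).of_norm.congr hcauchy
  calc catalanSeries g = 1 + ∑' n, catalan (n + 1) • g ^ (n + 1) := by
        rw [catalanSeries, hnorm.of_norm.tsum_eq_zero_add, catalan_zero, pow_zero, one_smul]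
    _ = 1 + g * catalanSeries g ^ 2 := by
        simp only [hsq, ← hsummable.tsum_mul_left, mul_smul_comm, ← pow_succ']

end CatalanSeries

section CommutingOuterInverse

variable {R : Type*} [Ring R]

/-- `x` is an outer inverse of `a` commuting with `a`: the algebraic part of the definitions of
generalized and ag-Drazin inverses. -/
structure IsCommOuterInverse (a x : R) : Prop where
  commute : Commute a x
  outer : x * a * x = x

namespace IsCommOuterInverse

variable {a b x y z : R}

lemma mul_sub_sq_mul (h : IsCommOuterInverse a x) : x * (a - a ^ 2 * x) = 0 := by
  have : x * (a ^ 2 * x) = x * a := by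
    rw [sq, mul_assoc a, h.commute.eq, ← mul_assoc, ← mul_assoc, h.outer]
  rw [mul_sub, this, sub_self]

lemma sub_sq_mul_mul (h : IsCommOuterInverse a x) : (a - a ^ 2 * x) * x = 0 := by
  have hcomm : Commute (a - a ^ 2 * x) x :=
    h.commute.sub_left ((h.commute.pow_left 2).mul_left (.refl x))
  rw [hcomm.eq, h.mul_sub_sq_mul]

lemma mul_eq_zero_of_mul_eq_zero (h : IsCommOuterInverse b y) (hz : z * b = 0) : z * y = 0 := by
  rw [← h.outer, ← h.commute.eq, ← mul_assoc, ← mul_assoc, hz, zero_mul, zero_mul]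

lemma mul_eq_zero_of_mul_eq_zero' (h : IsCommOuterInverse b y) (hz : b * z = 0) : y * z = 0 := by
  rw [← h.outer, mul_assoc y, h.commute.eq, mul_assoc, mul_assoc, hz, mul_zero, mul_zero]

lemma mul_eq_sub_sq_mul_mul (hx : IsCommOuterInverse a x)
    (hy : IsCommOuterInverse (a - a ^ 2 * x) y) : a * y = (a - a ^ 2 * x) * y := by
  have hxy : x * y = 0 := hy.mul_eq_zero_of_mul_eq_zero hx.mul_sub_sq_mul
  rw [sub_mul, mul_assoc (a ^ 2), hxy, mul_zero, sub_zero]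

lemma mul_eq_mul_sub_sq_mul (hx : IsCommOuterInverse a x)
    (hy : IsCommOuterInverse (a - a ^ 2 * x) y) : y * a = y * (a - a ^ 2 * x) := by
  have hyx : y * x = 0 := hy.mul_eq_zero_of_mul_eq_zero' hx.sub_sq_mul_mul
  rw [mul_sub, (hx.commute.pow_left 2).eq, ← mul_assoc y, hyx, zero_mul, sub_zero]

theorem add_of_sub_sq_mul (hx : IsCommOuterInverse a x)
    (hy : IsCommOuterInverse (a - a ^ 2 * x) y) : IsCommOuterInverse a (x + y) where
  commute := by
    refine hx.commute.add_right ?_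
    rw [commute_iff_eq, hx.mul_eq_sub_sq_mul_mul hy, hy.commute.eq, hx.mul_eq_mul_sub_sq_mul hy]
  outer := by
    have hxy : x * y = 0 := hy.mul_eq_zero_of_mul_eq_zero hx.mul_sub_sq_mul
    have hyx : y * x = 0 := hy.mul_eq_zero_of_mul_eq_zero' hx.sub_sq_mul_mul
    have hxay : x * a * y = 0 := by rw [← hx.commute.eq, mul_assoc, hxy, mul_zero]
    have hyax : y * a * x = 0 := by rw [mul_assoc, hx.commute.eq, ← mul_assoc, hyx, zero_mul]
    have hyay : y * a * y = y := by rw [hx.mul_eq_mul_sub_sq_mul hy, hy.outer]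
    rw [add_mul, add_mul, mul_add, mul_add, hx.outer, hxay, hyax, hyay, add_zero, zero_add]

lemma sub_sq_mul_add (hx : IsCommOuterInverse a x)
    (hy : IsCommOuterInverse (a - a ^ 2 * x) y) :
    a - a ^ 2 * (x + y) = (a - a ^ 2 * x) - (a - a ^ 2 * x) ^ 2 * y := by
  have hsq : a ^ 2 * y = (a - a ^ 2 * x) ^ 2 * y := by
    have hay := hx.mul_eq_sub_sq_mul_mul hy
    have hby := hy.commute.eq
    set b := a - a ^ 2 * x
    calc a ^ 2 * y = a * (y * b) := by rw [sq, mul_assoc, hay, hby]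
      _ = b ^ 2 * y := by rw [← mul_assoc, hay, mul_assoc, ← hby, ← mul_assoc, ← sq]
  rw [mul_add, hsq, sub_add_eq_sub_sub]

end IsCommOuterInverse

end CommutingOuterInverse

lemma exists_isIdempotentElem_of_sub_sq_eq {R : Type*} [CommRing R] {e w : R}
    (h : e - e ^ 2 = w - w ^ 2) (hw : IsUnit (1 - 2 * w)) :
    ∃ f, IsIdempotentElem f ∧ f * (1 - 2 * w) = e - w := by
  obtain ⟨v, hv⟩ := hw.exists_right_inv
  refine ⟨(e - w) * v, ?_, by rw [mul_assoc, mul_comm v, hv, mul_one]⟩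
  have hsq : (e - w) ^ 2 = (e - w) * (1 - 2 * w) := by linear_combination -h
  calc (e - w) * v * ((e - w) * v) = (e - w) ^ 2 * v * v := by ring
    _ = (e - w) * v * ((1 - 2 * w) * v) := by rw [hsq]; ring
    _ = (e - w) * v := by rw [hv, mul_one]

section BanachAlgebra

variable {A : Type*} [NormedRing A] [NormedAlgebra ℂ A] {a b f : A}

lemma IsQuasinilpotent.nontrivial_s3 (h : IsQuasinilpotent a) : Nontrivial A := by
  by_contra hA
  rw [not_nontrivial_iff_subsingleton] at hA
  exact Set.singleton_ne_empty 0 (h.symm.trans (spectrum.of_subsingleton a))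

lemma IsGDrazinInv.nontrivial_s3 (h : IsGDrazinInv a) : Nontrivial A :=
  let ⟨_, _, _, hq⟩ := h
  hq.nontrivial_s3

lemma IsGDrazinInv.of_isIdempotentElem (hf : IsIdempotentElem f) (hbf : Commute b f)
    (hq : IsQuasinilpotent (b * f)) (hu : IsUnit (b + f)) : IsGDrazinInv b := by
  obtain ⟨u, hu⟩ := hu
  have hbu : Commute b ↑u⁻¹ := Commute.units_inv_right (hu ▸ (Commute.refl b).add_right hbf)
  have hfc : (1 - f) * (1 - f) = 1 - f := hf.one_sub.eq
  have hmul : b * (↑u⁻¹ * (1 - f)) = 1 - f := by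
    have hb : b * (1 - f) = u * (1 - f) := by rw [hu, add_mul, hf.mul_one_sub_self, add_zero]
    rw [← mul_assoc, hbu.eq, mul_assoc, hb, Units.inv_mul_cancel_left]
  refine ⟨↑u⁻¹ * (1 - f), ?_, ?_, ?_⟩
  · exact hbu.mul_right ((Commute.one_right b).sub_right hbf)
  · rw [mul_assoc, hmul, mul_assoc, hfc]
  · rwa [sq, mul_assoc, hmul, mul_sub, mul_one, sub_sub_cancel]

variable [CompleteSpace A] {B : Type*} [NormedRing B] [NormedAlgebra ℂ B]

lemma summable_norm_pow_mul_pow_of_lt_inv_spectralRadius {r : NNReal}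
    (hr : r < (spectralRadius ℂ a)⁻¹) : Summable fun n ↦ ‖a ^ n‖ * (r : ℝ) ^ n := by
  obtain ⟨r', hrr', hr'⟩ := ENNReal.lt_iff_exists_nnreal_btwn.mp hr
  have hinverse := (spectrum.differentiableOn_inverse_one_sub_smul hr').hasFPowerSeriesOnBall
    (pos_of_gt (ENNReal.coe_lt_coe.mp hrr'))
  have hradius :=
    ((spectrum.hasFPowerSeriesOnBall_inverse_one_sub_smul ℂ a).exchange_radius hinverse).r_le
  simpa only [ContinuousMultilinearMap.norm_mkPiRing] using
    FormalMultilinearSeries.summable_norm_mul_pow _ (hrr'.trans_le hradius)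

lemma IsQuasinilpotent.summable_norm_pow_mul_pow (h : IsQuasinilpotent a) (r : NNReal) :
    Summable fun n ↦ ‖a ^ n‖ * (r : ℝ) ^ n := by
  have hradius : spectralRadius ℂ a = 0 := by
    rw [spectralRadius, h, iSup_singleton, nnnorm_zero, ENNReal.coe_zero]
  exact summable_norm_pow_mul_pow_of_lt_inv_spectralRadius (by simp [hradius])

lemma IsQuasinilpotent.map [Nontrivial A] {b : B} (h : IsQuasinilpotent b) (φ : B →ₐ[ℂ] A) :
    IsQuasinilpotent (φ b) := by
  have hsub : spectrum ℂ (φ b) ⊆ {0} := (AlgHom.spectrum_apply_subset φ b).trans h.subset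
  exact (spectrum.nonempty (φ b)).subset_singleton_iff.mp hsub

lemma IsGDrazinInv.map [Nontrivial A] {b : B} (h : IsGDrazinInv b) (φ : B →ₐ[ℂ] A) :
    IsGDrazinInv (φ b) := by
  obtain ⟨x, hbx, hxbx, hq⟩ := h
  refine ⟨φ x, by simpa only [map_mul] using congrArg φ hbx,
    by simpa only [map_mul] using congrArg φ hxbx, ?_⟩
  simpa only [map_sub, map_mul, map_pow] using hq.map φ

end BanachAlgebra

section CommutativeBanachAlgebra

open WeakDual Polynomial

variable {B : Type*} [NormedCommRing B] [NormedAlgebra ℂ B] [CompleteSpace B]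

lemma isUnit_of_forall_character_ne_zero {b : B} (h : ∀ φ : characterSpace ℂ B, φ b ≠ 0) :
    IsUnit b := by
  by_contra hb
  obtain ⟨φ, hφ⟩ := CharacterSpace.exists_apply_eq_zero hb
  exact h φ hφ

lemma isQuasinilpotent_iff_forall_character_eq_zero [Nontrivial B] {b : B} :
    IsQuasinilpotent b ↔ ∀ φ : characterSpace ℂ B, φ b = 0 := by
  simp only [IsQuasinilpotent, Set.eq_singleton_iff_nonempty_unique_mem,
    CharacterSpace.mem_spectrum_iff_exists, forall_exists_index, forall_apply_eq_imp_iff]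
  exact and_iff_right (spectrum.nonempty b)

lemma exists_isIdempotentElem_of_isQuasinilpotent_sub_sq {e : B}
    (he : IsQuasinilpotent (e - e ^ 2)) :
    ∃ f, IsIdempotentElem f ∧ ∀ φ : characterSpace ℂ B, φ f = φ e := by
  have := he.nontrivial_s3
  set g := e - e ^ 2
  have hg := isQuasinilpotent_iff_forall_character_eq_zero.mp he
  set w := g * catalanSeries g
  have hw (φ : characterSpace ℂ B) : φ w = 0 := by rw [map_mul, hg, zero_mul]
  have hgw : g = w - w ^ 2 := by
    have hC := catalanSeries_eq_one_add_mul_sq (he.summable_norm_pow_mul_pow 4)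
    linear_combination -g * hC
  have hunit : IsUnit (1 - 2 * w) :=
    isUnit_of_forall_character_ne_zero fun φ ↦ by simp [hw φ]
  obtain ⟨f, hf, hfw⟩ := exists_isIdempotentElem_of_sub_sq_eq hgw hunit
  refine ⟨f, hf, fun φ ↦ ?_⟩
  simpa [hw φ] using congrArg φ hfw

lemma isGDrazinInv_of_finite_spectrum_of_comm [Nontrivial B] {b : B}
    (hb : (spectrum ℂ b).Finite) : IsGDrazinInv b := by
  classical
  set S := insert 0 hb.toFinset
  have hS (φ : characterSpace ℂ B) : φ b ∈ S :=
    Finset.mem_insert_of_mem (hb.mem_toFinset.mpr (AlgHom.apply_mem_spectrum φ b))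
  set p : ℂ[X] := Lagrange.basis S id 0
  have hp_zero : p.eval 0 = 1 :=
    Lagrange.eval_basis_self Function.injective_id.injOn (Finset.mem_insert_self _ _)
  have hp_ne {z : ℂ} (hz : z ∈ S) (hz0 : z ≠ 0) : p.eval z = 0 :=
    Lagrange.eval_basis_of_ne (v := id) hz0.symm hz
  have hp (φ : characterSpace ℂ B) : φ (aeval b p) = p.eval (φ b) := by
    rw [← aeval_algHom_apply, coe_aeval_eq_eval]
  have hq : IsQuasinilpotent (aeval b p - aeval b p ^ 2) := by
    refine isQuasinilpotent_iff_forall_character_eq_zero.mpr fun φ ↦ ?_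
    rw [map_sub, map_pow, hp]
    by_cases h0 : φ b = 0
    · simp [h0, hp_zero]
    · simp [hp_ne (hS φ) h0]
  obtain ⟨f, hf, hfp⟩ := exists_isIdempotentElem_of_isQuasinilpotent_sub_sq hq
  refine .of_isIdempotentElem hf (.all b f) ?_ ?_
  · refine isQuasinilpotent_iff_forall_character_eq_zero.mpr fun φ ↦ ?_
    rw [map_mul, hfp, hp, mul_eq_zero]
    exact or_iff_not_imp_left.mpr (hp_ne (hS φ))
  · refine isUnit_of_forall_character_ne_zero fun φ ↦ ?_
    rw [map_add, hfp, hp]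
    by_cases h0 : φ b = 0
    · simp [h0, hp_zero]
    · simpa [hp_ne (hS φ) h0]

end CommutativeBanachAlgebra

section FiniteSpectrum

variable {A : Type*} [NormedRing A] [NormedAlgebra ℂ A] [CompleteSpace A] [Nontrivial A]

theorem isGDrazinInv_of_finite_spectrum {b : A} (hb : (spectrum ℂ b).Finite) :
    IsGDrazinInv b := by
  let B := Algebra.elemental ℂ b
  let : NormedCommRing B := { (inferInstance : NormedRing B) with mul_comm := mul_comm }
  let b' : B := ⟨b, Algebra.elemental.self_mem ℂ b⟩
  have hspec : spectrum ℂ b' = spectrum ℂ b :=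
    Subalgebra.spectrum_eq_of_isPreconnected_compl B b'
      (hb.countable.isConnected_compl_of_one_lt_rank (by simp)).isPreconnected
  exact (isGDrazinInv_of_finite_spectrum_of_comm (hspec ▸ hb)).map B.val

theorem memAcc_of_finite_spectrum {b : A} (hb : (spectrum ℂ b).Finite) : MemAcc b := by
  intro l _
  refine isGDrazinInv_of_finite_spectrum ?_
  rw [← Algebra.algebraMap_eq_smul_one, ← spectrum.sub_singleton_eq]
  exact hb.sub (Set.finite_singleton l)

theorem agDrazin_finite_spectrum_iff_gDrazin_general (a : A) :
    (∃ x : A, a * x = x * a ∧ x * a * x = x ∧ (spectrum ℂ (a - a ^ 2 * x)).Finite) ↔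
      IsGDrazinInv a := by
  constructor
  · rintro ⟨x, hax, hxax, hfin⟩
    obtain ⟨y, hby, hyby, hq⟩ := isGDrazinInv_of_finite_spectrum hfin
    have hx : IsCommOuterInverse a x := ⟨hax, hxax⟩
    have hy : IsCommOuterInverse (a - a ^ 2 * x) y := ⟨hby, hyby⟩
    have hxy := hx.add_of_sub_sq_mul hy
    exact ⟨x + y, hxy.commute, hxy.outer, hx.sub_sq_mul_add hy ▸ hq⟩
  · rintro ⟨x, hax, hxax, hq⟩
    exact ⟨x, hax, hxax, hq ▸ Set.finite_singleton 0⟩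

end FiniteSpectrum

theorem agDrazin_finite_spectrum_iff_gDrazin {A : Type*} [NormedRing A] [NormedAlgebra ℂ A]
    [CompleteSpace A] (a : A) :
    (∃ x : A, IsAgDrazinInverseOf x a ∧ (spectrum ℂ (a - a ^ 2 * x)).Finite) ↔
      IsGDrazinInv a := by
  constructor
  · rintro ⟨x, ⟨hax, hxax, hacc⟩, hfin⟩
    have := (hacc 1 one_ne_zero).nontrivial_s3
    exact (agDrazin_finite_spectrum_iff_gDrazin_general a).mp ⟨x, hax, hxax, hfin⟩
  · intro ha
    have := ha.nontrivial_s3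
    obtain ⟨x, hax, hxax, hfin⟩ := (agDrazin_finite_spectrum_iff_gDrazin_general a).mpr ha
    exact ⟨x, ⟨hax, hxax, memAcc_of_finite_spectrum hfin⟩, hfin⟩
end

section
/- Let A be a complex unital Banach algebra and let a ∈ A be ag-Drazin invertible such that no ag-Drazin inverse x of a satisfies that σ(a − a²x) is finite. Then there exists a sequence (λₙ) of nonzero isolated points of the spectrum σ(a) which converges to 0. -/
open Filter Topology

/-!
Let `x` be an ag-Drazin inverse of `a`. The idempotent `a * x` splits `a` into the orthogonal
summands `a - a ^ 2 * x` and `a ^ 2 * x`, so away from `0` the spectrum of `a` is the union of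
theirs. As `a ^ 2 * x` is invertible relative to `a * x`, with inverse `x`, its spectrum avoids a
punctured neighbourhood of `0`; there `a` and `a - a ^ 2 * x` have the same spectrum. Applied to
generalized Drazin inverses, this shows that elements of `A^acc` have no nonzero spectral
accumulation points. Hence the infinite compact spectrum of `a - a ^ 2 * x` accumulates exactly
at `0`, and its nonzero points close to `0` are isolated points of the spectrum of `a`.
-/

section Algebra

variable {R A : Type*} [CommRing R] [Ring A] [Algebra R A]

theorem mem_spectrum_add_iff_of_mul_eq_zero {b c : A} (hbc : b * c = 0) (hcb : c * b = 0)
    {r : R} (hr : IsUnit r) :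
    r ∈ spectrum R (b + c) ↔ r ∈ spectrum R b ∨ r ∈ spectrum R c := by
  have hfactor : (algebraMap R A r - b) * (algebraMap R A r - c) =
      algebraMap R A r * (algebraMap R A r - (b + c)) := by
    rw [sub_mul, mul_sub, mul_sub b, hbc, ← Algebra.commutes r b]
    noncomm_ring
  have hcomm : Commute (algebraMap R A r - b) (algebraMap R A r - c) :=
    (Algebra.commute_algebraMap_left r _).sub_left
      ((Algebra.commute_algebraMap_right r b).sub_right (hbc.trans hcb.symm))
  rw [spectrum.mem_iff, spectrum.mem_iff, spectrum.mem_iff, ← not_and_or, not_iff_not,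
    ← hcomm.isUnit_mul_iff, hfactor, (Algebra.commute_algebraMap_left r _).isUnit_mul_iff,
    and_iff_right (hr.map (algebraMap R A))]

theorem notMem_spectrum_of_isUnit_one_sub_smul {c x : A} (hcx : Commute c x)
    (hccx : c * c * x = c) {r : R} (hr : IsUnit r) (hunit : IsUnit (1 - r • x)) :
    r ∉ spectrum R c := by
  have hfactor : (algebraMap R A r - c) * (1 - c * x - r • x) =
      algebraMap R A r * (1 - r • x) := by
    simp only [Algebra.algebraMap_eq_smul_one, sub_mul, mul_sub, smul_mul_assoc, one_mul, mul_one,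
      mul_smul_comm, smul_sub, ← mul_assoc, hccx]
    abel
  have hcomm : Commute (algebraMap R A r - c) (1 - c * x - r • x) :=
    (Algebra.commute_algebraMap_left r _).sub_left
      (((Commute.one_right c).sub_right ((Commute.refl c).mul_right hcx)).sub_right
        (hcx.smul_right r))
  rw [spectrum.notMem_iff]
  exact (hcomm.isUnit_mul_iff.1 (hfactor ▸ (hr.map (algebraMap R A)).mul hunit)).1

end Algebra

section OuterInverse

variable {A : Type*} [Ring A] {a x : A}

theorem sq_mul_mul_sq_mul_eq (hax : Commute a x) (hxax : x * a * x = x) :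
    (a ^ 2 * x) * (a ^ 2 * x) = a * (a ^ 2 * x) :=
  calc (a ^ 2 * x) * (a ^ 2 * x) = a ^ 2 * (x * a ^ 2) * x := by simp only [mul_assoc]
    _ = a ^ 2 * (a ^ 2 * x) * x := by rw [(hax.symm.pow_right 2).eq]
    _ = a ^ 2 * a * (a * x * x) := by simp only [pow_two, mul_assoc]
    _ = a * (a ^ 2 * x) := by rw [hax.eq, hxax, ← pow_succ, ← mul_assoc, ← pow_succ']

theorem sub_sq_mul_mul_sq_mul_eq_zero (hax : Commute a x) (hxax : x * a * x = x) :
    (a - a ^ 2 * x) * (a ^ 2 * x) = 0 := by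
  rw [sub_mul, sq_mul_mul_sq_mul_eq hax hxax, sub_self]

theorem sq_mul_mul_sq_mul_mul_eq (hax : Commute a x) (hxax : x * a * x = x) :
    (a ^ 2 * x) * (a ^ 2 * x) * x = a ^ 2 * x :=
  calc (a ^ 2 * x) * (a ^ 2 * x) * x = a * (a ^ 2 * x) * x := by
        rw [sq_mul_mul_sq_mul_eq hax hxax]
    _ = a ^ 2 * (a * x * x) := by simp only [pow_two, mul_assoc]
    _ = a ^ 2 * x := by rw [hax.eq, hxax]

theorem mem_spectrum_iff_mem_spectrum_sub_sq_mul {R : Type*} [CommRing R] [Algebra R A]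
    (hax : Commute a x) (hxax : x * a * x = x) {r : R} (hr : IsUnit r)
    (hunit : IsUnit (1 - r • x)) :
    r ∈ spectrum R a ↔ r ∈ spectrum R (a - a ^ 2 * x) := by
  have hcomm : Commute (a ^ 2 * x) a := ((Commute.refl a).pow_left 2).mul_left hax.symm
  have horth := sub_sq_mul_mul_sq_mul_eq_zero hax hxax
  have horth' : (a ^ 2 * x) * (a - a ^ 2 * x) = 0 :=
    (hcomm.sub_right (Commute.refl _)).eq.trans horth
  have hnotMem : r ∉ spectrum R (a ^ 2 * x) :=
    notMem_spectrum_of_isUnit_one_sub_smul ((hax.pow_left 2).mul_left (Commute.refl x))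
      (sq_mul_mul_sq_mul_mul_eq hax hxax) hr hunit
  simpa only [sub_add_cancel, or_iff_left hnotMem] using
    mem_spectrum_add_iff_of_mul_eq_zero horth horth' hr

end OuterInverse

section NormedAlgebra

variable {𝕜 A : Type*} [NormedField 𝕜] [NormedRing A] [NormedAlgebra 𝕜 A]

theorem eventually_isUnit_one_sub_smul [HasSummableGeomSeries A] (x : A) :
    ∀ᶠ r in 𝓝 (0 : 𝕜), IsUnit (1 - r • x) := by
  have hcont : ContinuousAt (fun r : 𝕜 ↦ 1 - r • x) 0 := by fun_prop
  exact hcont.eventually (Units.isOpen.mem_nhds (by simp))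

theorem eventually_mem_spectrum_iff_mem_spectrum_sub_sq_mul [HasSummableGeomSeries A] {a x : A}
    (hax : Commute a x) (hxax : x * a * x = x) :
    ∀ᶠ r in 𝓝[≠] (0 : 𝕜), r ∈ spectrum 𝕜 a ↔ r ∈ spectrum 𝕜 (a - a ^ 2 * x) := by
  filter_upwards [self_mem_nhdsWithin,
    (eventually_isUnit_one_sub_smul x).filter_mono nhdsWithin_le_nhds] with r hr hunit
  exact mem_spectrum_iff_mem_spectrum_sub_sq_mul hax hxax (IsUnit.mk0 r hr) hunit

end NormedAlgebra

section AccumulationPoints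

variable {X : Type*} [TopologicalSpace X]

theorem accPt_principal_congr {s t : Set X} {x : X} (h : ∀ᶠ y in 𝓝[≠] x, y ∈ s ↔ y ∈ t) :
    AccPt x (𝓟 s) ↔ AccPt x (𝓟 t) := by
  rw [accPt_iff_frequently_nhdsNE, accPt_iff_frequently_nhdsNE]
  exact frequently_congr h

theorem eventually_accPt_principal_congr [T1Space X] {s t : Set X} {x : X}
    (h : ∀ᶠ y in 𝓝[≠] x, y ∈ s ↔ y ∈ t) :
    ∀ᶠ y in 𝓝[≠] x, AccPt y (𝓟 s) ↔ AccPt y (𝓟 t) := by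
  filter_upwards [self_mem_nhdsWithin, eventually_eventually_nhdsWithin.2 h] with y hyx hy
  rw [isOpen_compl_singleton.nhdsWithin_eq hyx] at hy
  exact accPt_principal_congr (hy.filter_mono nhdsWithin_le_nhds)

theorem accPt_of_infinite_of_isCompact {s : Set X} {x : X} (hs : s.Infinite) (hcpt : IsCompact s)
    (hne : ∀ y ≠ x, ¬ AccPt y (𝓟 s)) : AccPt x (𝓟 s) := by
  obtain ⟨y, -, hy⟩ := hs.exists_accPt_of_subset_isCompact hcpt subset_rfl
  obtain rfl : y = x := by_contra fun hyx ↦ hne y hyx hy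
  exact hy

end AccumulationPoints

theorem accPt_zero_spectrum_sub_smul_one {R A : Type*} [CommRing R] [TopologicalSpace R]
    [ContinuousSub R] [Ring A] [Algebra R A] {a : A} {r : R}
    (h : AccPt r (𝓟 (spectrum R a))) :
    AccPt 0 (𝓟 (spectrum R (a - r • (1 : A)))) := by
  have hmap := h.map (f := fun s ↦ s - r) (by fun_prop) sub_left_injective
  rwa [sub_self, map_principal, ← Set.sub_singleton, spectrum.sub_singleton_eq,
    Algebra.algebraMap_eq_smul_one] at hmap

section Drazin

variable {A : Type*} [NormedRing A] [NormedAlgebra ℂ A]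

theorem IsGDrazinInv.not_accPt_zero [HasSummableGeomSeries A] {a : A} (ha : IsGDrazinInv a) :
    ¬ AccPt 0 (𝓟 (spectrum ℂ a)) := by
  obtain ⟨x, hax, hxax, hquasi⟩ := ha
  rw [accPt_iff_frequently_nhdsNE, not_frequently]
  filter_upwards [self_mem_nhdsWithin,
    eventually_mem_spectrum_iff_mem_spectrum_sub_sq_mul hax hxax] with l hl hiff
  rw [IsQuasinilpotent] at hquasi
  rwa [hiff, hquasi]

theorem MemAcc.not_accPt [HasSummableGeomSeries A] {a : A} (ha : MemAcc a) {l : ℂ} (hl : l ≠ 0) :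
    ¬ AccPt l (𝓟 (spectrum ℂ a)) :=
  mt accPt_zero_spectrum_sub_smul_one (ha l hl).not_accPt_zero

theorem MemAcc.accPt_zero_of_infinite [CompleteSpace A] {a : A} (ha : MemAcc a)
    (hinf : (spectrum ℂ a).Infinite) : AccPt 0 (𝓟 (spectrum ℂ a)) :=
  accPt_of_infinite_of_isCompact hinf (spectrum.isCompact a) fun _ ↦ ha.not_accPt

theorem IsAgDrazinInverseOf.frequently_isolated_spectrum [CompleteSpace A] {a x : A}
    (hx : IsAgDrazinInverseOf x a) (hinf : (spectrum ℂ (a - a ^ 2 * x)).Infinite) :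
    ∃ᶠ l in 𝓝[≠] (0 : ℂ), l ∈ spectrum ℂ a ∧ ¬ AccPt l (𝓟 (spectrum ℂ a)) := by
  obtain ⟨hax, hxax, hacc⟩ := hx
  have hiff := eventually_mem_spectrum_iff_mem_spectrum_sub_sq_mul (𝕜 := ℂ) hax hxax
  have hfreq := accPt_iff_frequently_nhdsNE.1 (hacc.accPt_zero_of_infinite hinf)
  refine (hfreq.and_eventually
    (hiff.and ((eventually_accPt_principal_congr hiff).and self_mem_nhdsWithin))).mono ?_
  rintro l ⟨hl, hmem, haccPt, hne⟩
  exact ⟨hmem.2 hl, mt haccPt.1 (hacc.not_accPt hne)⟩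

end Drazin

theorem exists_seq_isolated_spectrum_tendsto_zero {A : Type*} [NormedRing A]
    [NormedAlgebra ℂ A] [CompleteSpace A] (a : A)
    (ha : IsAgDrazinInv a)
    (hcard : ∀ x : A, IsAgDrazinInverseOf x a → ¬ (spectrum ℂ (a - a ^ 2 * x)).Finite) :
    ∃ lam : ℕ → ℂ,
      (∀ n, lam n ≠ 0 ∧ lam n ∈ spectrum ℂ a ∧ ¬ AccPt (lam n) (𝓟 (spectrum ℂ a))) ∧
      Tendsto lam atTop (𝓝 0) := by
  obtain ⟨x, hx⟩ := ha
  have hfreq := (hx.frequently_isolated_spectrum (hcard x hx)).and_eventually self_mem_nhdsWithin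
  obtain ⟨lam, htendsto, hlam⟩ := exists_seq_forall_of_frequently hfreq
  exact ⟨lam, fun n ↦ ⟨(hlam n).2, (hlam n).1⟩, htendsto.mono_right nhdsWithin_le_nhds⟩
end

section
/- Let A be a complex unital Banach algebra, a ∈ A, and let p ∈ A be an idempotent with ap = pa such that a + p is invertible in A and ap ∈ A^acc. Then b = (a + p)⁻¹(1 − p) is an ag-Drazin inverse of a, i.e., ab = ba, bab = b, and a − a²b ∈ A^acc. -/
open Filter Topology

/-!
Multiplying by `1 - p` kills `p`, so `a` and `a + p` agree on the corner cut out by `1 - p`. Hence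
`b = (a + p)⁻¹(1 - p)` inverts `a` on that corner and vanishes on the complementary one:
`ab = ba = 1 - p` and `pb = 0`. This gives `bab = (1 - p)b = b` and `a - a²b = a(1 - ab) = ap`.
-/

theorem commute_ringInverse_right {M : Type*} [MonoidWithZero M] {a b : M} (h : Commute a b) :
    Commute a (Ring.inverse b) := by
  by_cases hb : IsUnit b
  · obtain ⟨u, rfl⟩ := hb
    rw [Ring.inverse_unit]
    exact h.units_inv_right
  · rw [Ring.inverse_non_unit b hb]
    exact Commute.zero_right a

section Ring

variable {R : Type*} [Ring R] {a p : R}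

theorem commute_ringInverse_add_mul_one_sub (h : Commute a p) :
    Commute a (Ring.inverse (a + p) * (1 - p)) :=
  (commute_ringInverse_right ((Commute.refl a).add_right h)).mul_right
    ((Commute.one_right a).sub_right h)

theorem ringInverse_add_mul_one_sub_mul_self (hp : IsIdempotentElem p) (h : Commute a p)
    (hu : IsUnit (a + p)) : Ring.inverse (a + p) * (1 - p) * a = 1 - p := by
  have corner_eq : (1 - p) * a = (a + p) * (1 - p) := by
    rw [add_mul, hp.mul_one_sub_self, add_zero, ((Commute.one_right a).sub_right h).eq]
  rw [mul_assoc, corner_eq, Ring.inverse_mul_cancel_left _ _ hu]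

theorem mul_ringInverse_add_mul_one_sub_eq_zero (hp : IsIdempotentElem p) (h : Commute a p) :
    p * (Ring.inverse (a + p) * (1 - p)) = 0 := by
  have commute_inverse : Commute p (Ring.inverse (a + p)) :=
    commute_ringInverse_right (h.symm.add_right (Commute.refl p))
  rw [commute_inverse.left_comm, hp.mul_one_sub_self, mul_zero]

end Ring

section NormedAlgebra

variable {A : Type*} [NormedRing A] [NormedAlgebra ℂ A] {a p : A}

theorem isAgDrazinInverseOf_of_mul_eq_one_sub {b : A} (hab : Commute a b) (hba : b * a = 1 - p)
    (hpb : p * b = 0) (hacc : MemAcc (a * p)) : IsAgDrazinInverseOf b a := by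
  have mul_mul_eq : b * a * b = b := by rw [hba, sub_mul, one_mul, hpb, sub_zero]
  have sub_sq_mul_eq : a - a ^ 2 * b = a * p := by
    rw [sq, mul_assoc, hab.eq, hba, mul_sub, mul_one, sub_sub_cancel]
  exact ⟨hab.eq, mul_mul_eq, sub_sq_mul_eq ▸ hacc⟩

theorem agDrazinInverse_of_idem_unit_general (hp : IsIdempotentElem p) (hcomm : Commute a p)
    (hu : IsUnit (a + p)) (hacc : MemAcc (a * p)) :
    IsAgDrazinInverseOf (Ring.inverse (a + p) * (1 - p)) a :=
  isAgDrazinInverseOf_of_mul_eq_one_sub (commute_ringInverse_add_mul_one_sub hcomm)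
    (ringInverse_add_mul_one_sub_mul_self hp hcomm hu)
    (mul_ringInverse_add_mul_one_sub_eq_zero hp hcomm) hacc

end NormedAlgebra

theorem agDrazinInverse_of_idem_unit {A : Type*} [NormedRing A] [NormedAlgebra ℂ A]
    [CompleteSpace A] (a p : A) (hp : p * p = p) (hcomm : a * p = p * a)
    (hu : IsUnit (a + p)) (hacc : MemAcc (a * p)) :
    IsAgDrazinInverseOf (Ring.inverse (a + p) * (1 - p)) a :=
  agDrazinInverse_of_idem_unit_general hp hcomm hu hacc
end
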